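/- Let m ≥ 1, S ⊆ ℝ^m, and let z ∈ ℝ^m satisfy z_i > r'_i for all r' ∈ S and all i (a strict ideal vector). If r ∈ S is weakly Pareto optimal in S, then there exists λ ∈ Δ_{m-1} with λ_i > 0 for every i such that r maximizes the weighted Tchebycheff function g^Tche_λ(r') = min_{1 ≤ i ≤ m} λ_i (r'_i − z_i) over S. Together with the converse direction, a point of S is weakly Pareto optimal if and only if it is an optimal solution of the Tchebycheff function for some such preference vector. -/

import Mathlib

/-!
Every `r` strictly below `z` is equalized by the weights proportional to `(z i - r i)⁻¹`: all the
terms `w i * (r i - z i)` coincide. If no point of `S` beats `r` in every coordinate, then each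
`x ∈ S` has a coordinate with `x i ≤ r i`, and that coordinate alone pushes the Tchebycheff minimum
at `x` below the common value, which is the minimum at `r`. Conversely, for positive weights the
Tchebycheff function strictly increases when all coordinates do.
-/

section WeaklyParetoOptimal

variable {ι : Type*} {α : ι → Type*} {S : Set (∀ i, α i)} {r : ∀ i, α i}

/-- Weak Pareto optimality: no point of `S` strictly improves on `r` in all coordinates at once.
As with `IsMaxOn`, membership of `r` in `S` is not part of the definition. -/
def IsWeaklyParetoOptimal [∀ i, LT (α i)] (S : Set (∀ i, α i)) (r : ∀ i, α i) : Prop :=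
  ¬ ∃ x ∈ S, StrongLT r x

theorem IsWeaklyParetoOptimal.exists_le [∀ i, LinearOrder (α i)] (h : IsWeaklyParetoOptimal S r)
    {x : ∀ i, α i} (hx : x ∈ S) : ∃ i, x i ≤ r i := by
  by_contra! hlt
  exact h ⟨x, hx, hlt⟩

theorem IsWeaklyParetoOptimal.of_isMaxOn [∀ i, LT (α i)] {β : Type*} [Preorder β]
    {f : (∀ i, α i) → β} (hmax : IsMaxOn f S r) (hf : ∀ x, StrongLT r x → f r < f x) :
    IsWeaklyParetoOptimal S r :=
  fun ⟨x, hx, hrx⟩ => (hf x hrx).not_ge (hmax hx)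

end WeaklyParetoOptimal

section WeightedTchebycheff

variable {ι K : Type*} [Fintype ι] [Nonempty ι] [Ring K] [LinearOrder K]
  {S : Set (ι → K)} {w z x r : ι → K} {c : K}

/-- The weighted Tchebycheff function `g^Tche_w` with reference point `z`, which scalarizes a
multi-objective maximization problem. -/
def weightedTchebycheff (w z x : ι → K) : K :=
  Finset.univ.inf' Finset.univ_nonempty fun i => w i * (x i - z i)

theorem weightedTchebycheff_le (w z x : ι → K) (i : ι) :
    weightedTchebycheff w z x ≤ w i * (x i - z i) :=
  Finset.inf'_le _ (Finset.mem_univ i)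

theorem weightedTchebycheff_eq_of_forall_eq (h : ∀ i, w i * (r i - z i) = c) :
    weightedTchebycheff w z r = c := by
  simp only [weightedTchebycheff, h, Finset.inf'_const]

variable [IsStrictOrderedRing K]

theorem weightedTchebycheff_lt_of_strongLT (hw : ∀ i, 0 < w i) (hrx : StrongLT r x) :
    weightedTchebycheff w z r < weightedTchebycheff w z x :=
  (Finset.lt_inf'_iff _).mpr fun i _ =>
    (weightedTchebycheff_le w z r i).trans_lt <|
      mul_lt_mul_of_pos_left (sub_lt_sub_right (hrx i) (z i)) (hw i)

theorem IsWeaklyParetoOptimal.isMaxOn_weightedTchebycheff (h : IsWeaklyParetoOptimal S r)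
    (hw : ∀ i, 0 ≤ w i) (hc : ∀ i, w i * (r i - z i) = c) :
    IsMaxOn (weightedTchebycheff w z) S r := by
  intro x hx
  obtain ⟨i, hi⟩ := h.exists_le hx
  calc
    weightedTchebycheff w z x ≤ w i * (x i - z i) := weightedTchebycheff_le w z x i
    _ ≤ w i * (r i - z i) := mul_le_mul_of_nonneg_left (sub_le_sub_right hi (z i)) (hw i)
    _ = weightedTchebycheff w z r := by rw [hc i, weightedTchebycheff_eq_of_forall_eq hc]

end WeightedTchebycheff

section EqualizingWeight

variable {ι K : Type*} [Fintype ι] [Field K] {z r : ι → K}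

/-- The normalized weights proportional to `(z i - r i)⁻¹`, for which all the terms of the
Tchebycheff minimum at `r` agree. -/
def equalizingWeight (z r : ι → K) (i : ι) : K :=
  (z i - r i)⁻¹ / ∑ j, (z j - r j)⁻¹

theorem equalizingWeight_mul_sub {i : ι} (hi : r i ≠ z i) :
    equalizingWeight z r i * (r i - z i) = -(∑ j, (z j - r j)⁻¹)⁻¹ := by
  have hzr : z i - r i ≠ 0 := sub_ne_zero.mpr hi.symm
  rw [equalizingWeight, div_mul_eq_mul_div, ← neg_sub (z i), mul_neg, inv_mul_cancel₀ hzr,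
    neg_div, one_div]

variable [Nonempty ι] [LinearOrder K] [IsStrictOrderedRing K]

theorem sum_inv_sub_pos (h : StrongLT r z) : 0 < ∑ j, (z j - r j)⁻¹ :=
  Finset.sum_pos (fun j _ => inv_pos.mpr (sub_pos.mpr (h j))) Finset.univ_nonempty

theorem equalizingWeight_pos (h : StrongLT r z) (i : ι) : 0 < equalizingWeight z r i :=
  div_pos (inv_pos.mpr (sub_pos.mpr (h i))) (sum_inv_sub_pos h)

theorem equalizingWeight_mem_stdSimplex (h : StrongLT r z) :
    equalizingWeight z r ∈ stdSimplex K ι := by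
  refine ⟨fun i => (equalizingWeight_pos h i).le, ?_⟩
  simp only [equalizingWeight]
  rw [← Finset.sum_div, div_self (sum_inv_sub_pos h).ne']

end EqualizingWeight

theorem weakly_pareto_optimal_iff_tchebycheff_maximizer_general
    {ι K : Type*} [Fintype ι] [Nonempty ι] [Field K] [LinearOrder K] [IsStrictOrderedRing K]
    (S : Set (ι → K)) {z r : ι → K} (hrz : StrongLT r z) :
    IsWeaklyParetoOptimal S r ↔
      ∃ w ∈ stdSimplex K ι, (∀ i, 0 < w i) ∧ IsMaxOn (weightedTchebycheff w z) S r := by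
  constructor
  · intro h
    exact ⟨equalizingWeight z r, equalizingWeight_mem_stdSimplex hrz, equalizingWeight_pos hrz,
      h.isMaxOn_weightedTchebycheff (fun i => (equalizingWeight_pos hrz i).le)
        fun i => equalizingWeight_mul_sub (hrz i).ne⟩
  · rintro ⟨w, -, hw, hmax⟩
    exact .of_isMaxOn hmax fun x => weightedTchebycheff_lt_of_strongLT hw

/-- Let `z` be a strict ideal vector for `S` (`z_i > r'_i` for all
`r' ∈ S`, all `i`) and let `r ∈ S`. Then `r` is weakly Pareto optimal in `S`
if and only if there exists a preference vector `lam ∈ Δ_{m-1}` with all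
entries positive such that `r` maximizes the weighted Tchebycheff function
`r' ↦ min_{1 ≤ i ≤ m} lam i * (r' i - z i)` over `S`. -/
theorem weakly_pareto_optimal_iff_tchebycheff_maximizer
    (m : ℕ) (hm : 1 ≤ m) (S : Set (Fin m → ℝ))
    (z : Fin m → ℝ) (hz : ∀ r' ∈ S, ∀ i, r' i < z i)
    (r : Fin m → ℝ) (hr : r ∈ S) :
    (¬ ∃ r' ∈ S, ∀ i, r i < r' i) ↔
      ∃ lam : Fin m → ℝ, (∀ i, 0 ≤ lam i) ∧ (∑ i, lam i = 1) ∧ (∀ i, 0 < lam i) ∧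
        ∀ r' ∈ S,
          Finset.univ.inf' (Finset.univ_nonempty_iff.mpr ⟨⟨0, hm⟩⟩)
              (fun i => lam i * (r' i - z i)) ≤
            Finset.univ.inf' (Finset.univ_nonempty_iff.mpr ⟨⟨0, hm⟩⟩)
              (fun i => lam i * (r i - z i)) := by
  have : Nonempty (Fin m) := ⟨⟨0, hm⟩⟩
  simpa only [IsWeaklyParetoOptimal, StrongLT, stdSimplex, Set.mem_ofPred_eq, and_assoc,
    isMaxOn_iff, weightedTchebycheff] using
    weakly_pareto_optimal_iff_tchebycheff_maximizer_general S (hz r hr)
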